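/- arXiv:2112.13978 — 2 statements merged into one kernel-verified Lean document; each statement's English description precedes it below -/
import Mathlib

section
/- Let n ≥ 2 and let g : ℝⁿ → ℝ be continuous and compactly supported. Then for every x ∈ ℝⁿ, the linearization of the single pixel X-ray transform at the zero function equals minus the normal operator: lim_{ε→0} ε^{-1} ( K[εg](x) − |S^{n-1}| ) = − X'Xg(x). -/
open MeasureTheory Metric Real

/-- The `n`-dimensional Euclidean space. -/
abbrev Euc (n : ℕ) := EuclideanSpace ℝ (Fin n)

/-- The standard surface measure on the unit sphere `S^{n-1} ⊂ ℝⁿ`. -/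
noncomputable def sphereMeasure (n : ℕ) : Measure (sphere (0 : Euc n) 1) :=
  (volume : Measure (Euc n)).toSphere

/-- The surface measure `|S^{n-1}|` of the unit sphere in `ℝⁿ`. -/
noncomputable def sphereVol (n : ℕ) : ℝ := (sphereMeasure n Set.univ).toReal

/-- The X-ray transform `Xf(x,θ) = ∫_ℝ f(x+sθ) ds`. -/
noncomputable def Xray {n : ℕ} (f : Euc n → ℝ) (x θ : Euc n) : ℝ :=
  ∫ s : ℝ, f (x + s • θ)

/-- The normal operator `X'Xf(x) = ∫_{S^{n-1}} Xf(x,θ) dθ`. -/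
noncomputable def normalOp {n : ℕ} (f : Euc n → ℝ) (x : Euc n) : ℝ :=
  ∫ θ : sphere (0 : Euc n) 1, Xray f x (θ : Euc n) ∂(sphereMeasure n)

/-- The single pixel X-ray transform `Kf(x) = ∫_{S^{n-1}} e^{-Xf(x,θ)} dθ`. -/
noncomputable def singlePixel {n : ℕ} (f : Euc n → ℝ) (x : Euc n) : ℝ :=
  ∫ θ : sphere (0 : Euc n) 1, Real.exp (-(Xray f x (θ : Euc n))) ∂(sphereMeasure n)

/-- The Fourier transform `𝓕f(ξ) = ∫ e^{-i x·ξ} f(x) dx`. -/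
noncomputable def FT {n : ℕ} (f : Euc n → ℝ) (ξ : Euc n) : ℂ :=
  ∫ x : Euc n, Complex.exp (-(Complex.I * ((inner ℝ x ξ : ℝ) : ℂ))) * (f x : ℂ)

/-- The inverse Fourier transform `𝓕⁻¹g(x) = (2π)^{-n} ∫ e^{i x·ξ} g(ξ) dξ`. -/
noncomputable def invFT {n : ℕ} (g : Euc n → ℂ) (x : Euc n) : ℂ :=
  ((((2 * π) ^ n)⁻¹ : ℝ) : ℂ) * ∫ ξ : Euc n, Complex.exp (Complex.I * ((inner ℝ x ξ : ℝ) : ℂ)) * g ξ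

/-- The `L²(ℝⁿ)` norm `(∫ |f|²)^{1/2}`. -/
noncomputable def L2norm {n : ℕ} (f : Euc n → ℝ) : ℝ :=
  (∫ x : Euc n, f x ^ 2) ^ ((1 : ℝ) / 2)

/-- The `H¹(U)` norm `(∫_U |u|²)^{1/2} + (∫_U |∇u|²)^{1/2}`. -/
noncomputable def H1norm {n : ℕ} (U : Set (Euc n)) (u : Euc n → ℝ) : ℝ :=
  (∫ x in U, u x ^ 2) ^ ((1 : ℝ) / 2) + (∫ x in U, ‖fderiv ℝ u x‖ ^ 2) ^ ((1 : ℝ) / 2)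

/-! Since `X` is linear, `ε ↦ K[εg](x)` is the moment generating function of `θ ↦ -Xg(x,θ)` on the
sphere, with value `|S^{n-1}|` at `ε = 0`. As `Xg(x,·)` is bounded, this function is differentiable
at zero, and its derivative there is the first moment `-X'Xg(x)` of `θ ↦ -Xg(x,θ)`. -/

open ProbabilityTheory
open scoped ENNReal NNReal

theorem integrableExpSet_eq_univ_of_mem_Icc {Ω : Type*} [MeasurableSpace Ω] {μ : Measure Ω}
    [IsFiniteMeasure μ] {Y : Ω → ℝ} {a b : ℝ} (hY : AEMeasurable Y μ)
    (hab : ∀ᵐ ω ∂μ, Y ω ∈ Set.Icc a b) : integrableExpSet Y μ = Set.univ :=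
  Set.eq_univ_of_forall fun _ => integrable_exp_mul_of_mem_Icc hY hab

section Line

variable {E F : Type*} [SeminormedAddCommGroup E] [NormedSpace ℝ E] [NormedAddCommGroup F]
  {f : E → F}

theorem lintegral_enorm_line_le_of_support_subset_closedBall {x θ : E} {R : ℝ} {C : ℝ≥0∞}
    (hθ : ‖θ‖ = 1) (hC : ∀ y, ‖f y‖ₑ ≤ C) (hR : Function.support f ⊆ closedBall x R) :
    ∫⁻ s : ℝ, ‖f (x + s • θ)‖ₑ ≤ C * ENNReal.ofReal (2 * R) := by
  have h_zero : ∀ s ∉ closedBall (0 : ℝ) R, f (x + s • θ) = 0 := fun s hs => by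
    by_contra hf
    exact hs (by simpa [norm_smul, hθ] using hR hf)
  calc ∫⁻ s : ℝ, ‖f (x + s • θ)‖ₑ
      ≤ ∫⁻ s : ℝ, (closedBall (0 : ℝ) R).indicator (fun _ => C) s :=
        lintegral_mono fun s => Set.le_indicator_apply (fun _ => hC _) fun hs => by
          rw [h_zero s hs, enorm_zero]
    _ ≤ C * volume (closedBall (0 : ℝ) R) := lintegral_indicator_const_le _ _
    _ = C * ENNReal.ofReal (2 * R) := by rw [Real.volume_closedBall]

theorem exists_forall_lintegral_enorm_line_le (hf : Continuous f) (hfc : HasCompactSupport f)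
    (x : E) : ∃ M : ℝ≥0, ∀ θ : E, ‖θ‖ = 1 → ∫⁻ s : ℝ, ‖f (x + s • θ)‖ₑ ≤ M := by
  obtain ⟨C, hC⟩ := hfc.exists_bound_of_continuous hf
  obtain ⟨R, hR⟩ := hfc.isCompact.isBounded.subset_closedBall x
  refine ⟨C.toNNReal * (2 * R).toNNReal, fun θ hθ => ?_⟩
  rw [ENNReal.coe_mul]
  have h_enorm : ∀ y, ‖f y‖ₑ ≤ ENNReal.ofReal C := fun y => by
    rw [← ofReal_norm]
    exact ENNReal.ofReal_le_ofReal (hC y)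
  exact lintegral_enorm_line_le_of_support_subset_closedBall hθ h_enorm
    ((subset_tsupport f).trans hR)

end Line

instance isFiniteMeasure_sphereMeasure (n : ℕ) : IsFiniteMeasure (sphereMeasure n) :=
  inferInstanceAs (IsFiniteMeasure (volume : Measure (Euc n)).toSphere)

section Xray

variable {n : ℕ}

theorem Xray_const_mul (c : ℝ) (g : Euc n → ℝ) (x θ : Euc n) :
    Xray (fun y => c * g y) x θ = c * Xray g x θ :=
  integral_const_mul c _

theorem measurable_Xray {g : Euc n → ℝ} (hg : Measurable g) (x : Euc n) :
    Measurable (Xray g x) :=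
  (StronglyMeasurable.integral_prod_right (f := fun (θ : Euc n) (s : ℝ) => g (x + s • θ))
    (by fun_prop : Measurable _).stronglyMeasurable).measurable

theorem Xray_mem_Icc_of_lintegral_enorm_le {g : Euc n → ℝ} {x θ : Euc n} {M : ℝ≥0}
    (hM : ∫⁻ s : ℝ, ‖g (x + s • θ)‖ₑ ≤ M) : Xray g x θ ∈ Set.Icc (-M : ℝ) M := by
  rw [Set.mem_Icc, ← abs_le, ← Real.norm_eq_abs]
  exact enorm_le_coe.mp ((enorm_integral_le_lintegral_enorm _).trans hM)

theorem singlePixel_const_mul_eq_mgf (g : Euc n → ℝ) (x : Euc n) (ε : ℝ) :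
    singlePixel (fun y => ε * g y) x =
      mgf (fun θ : sphere (0 : Euc n) 1 => -Xray g x θ) (sphereMeasure n) ε := by
  simp only [singlePixel, mgf, Xray_const_mul, mul_neg]

theorem singlePixel_zero_mul (g : Euc n → ℝ) (x : Euc n) :
    singlePixel (fun y => 0 * g y) x = sphereVol n := by
  rw [singlePixel_const_mul_eq_mgf, mgf_zero', sphereVol, measureReal_def]

theorem hasDerivAt_singlePixel_const_mul_zero {g : Euc n → ℝ} {x : Euc n} {M : ℝ≥0}
    (hg : Measurable g)
    (hM : ∀ᵐ θ : sphere (0 : Euc n) 1 ∂sphereMeasure n,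
      ∫⁻ s : ℝ, ‖g (x + s • (θ : Euc n))‖ₑ ≤ M) :
    HasDerivAt (fun ε : ℝ => singlePixel (fun y => ε * g y) x) (-normalOp g x) 0 := by
  have h_meas : Measurable fun θ : sphere (0 : Euc n) 1 => -Xray g x θ :=
    ((measurable_Xray hg x).comp measurable_subtype_coe).neg
  have h_bdd : ∀ᵐ θ : sphere (0 : Euc n) 1 ∂sphereMeasure n,
      -Xray g x θ ∈ Set.Icc (-M : ℝ) M := by
    filter_upwards [hM] with θ hθ
    rw [Set.neg_mem_Icc_iff, neg_neg]
    exact Xray_mem_Icc_of_lintegral_enorm_le hθ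
  have h_interior : 0 ∈ interior (integrableExpSet
      (fun θ : sphere (0 : Euc n) 1 => -Xray g x θ) (sphereMeasure n)) := by
    simp [integrableExpSet_eq_univ_of_mem_Icc h_meas.aemeasurable h_bdd]
  simpa [singlePixel_const_mul_eq_mgf, normalOp, integral_neg] using hasDerivAt_mgf h_interior

end Xray

/- Bounding `∫⁻ ‖g‖ₑ` along lines, rather than `|Xray g x θ|`, makes `g` integrable along almost
every line through `x`, where `Xray` would otherwise take the junk value `0`. -/
theorem singlePixel_linearization_general (n : ℕ) (g : Euc n → ℝ) (hg : Measurable g)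
    (x : Euc n) (M : ℝ≥0)
    (hM : ∀ᵐ θ : sphere (0 : Euc n) 1 ∂sphereMeasure n,
      ∫⁻ s : ℝ, ‖g (x + s • (θ : Euc n))‖ₑ ≤ M) :
    Filter.Tendsto (fun ε : ℝ => ε⁻¹ * (singlePixel (fun y => ε * g y) x - sphereVol n))
      (nhdsWithin 0 {(0 : ℝ)}ᶜ) (nhds (-(normalOp g x))) := by
  simpa only [zero_add, singlePixel_zero_mul, smul_eq_mul] using
    (hasDerivAt_singlePixel_const_mul_zero hg hM).tendsto_slope_zero

/-- For `n ≥ 2` and `g` continuous with compact support, the linearization of the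
single pixel X-ray transform at zero is minus the normal operator:
`lim_{ε→0} ε⁻¹ (K[εg](x) − |S^{n-1}|) = −X'Xg(x)`. -/
theorem singlePixel_linearization (n : ℕ) (hn : 2 ≤ n) (g : Euc n → ℝ)
    (hg : Continuous g) (hgc : HasCompactSupport g) (x : Euc n) :
    Filter.Tendsto (fun ε : ℝ => ε⁻¹ * (singlePixel (fun y => ε * g y) x - sphereVol n))
      (nhdsWithin 0 {(0 : ℝ)}ᶜ) (nhds (-(normalOp g x))) := by
  obtain ⟨M, hM⟩ := exists_forall_lintegral_enorm_line_le hg hgc x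
  exact singlePixel_linearization_general n g hg.measurable x M
    (ae_of_all _ fun θ => hM θ (norm_eq_of_mem_sphere θ))
end

section
/- Let n ≥ 3 and let Ω, Ω₁ ⊂ ℝⁿ be open bounded sets with closure(Ω) ⊂ Ω₁. Then there exists a constant C > 0, depending on n, Ω and Ω₁, such that for every continuously differentiable f : ℝⁿ → ℝ supported in the closure of Ω, the gradient of Kf satisfies ‖∇(Kf)‖_{L²(Ω₁)} ≤ C e^{C‖f‖_{C⁰}} ‖∇f‖_{L²(ℝⁿ)}, where ‖f‖_{C⁰} is the supremum norm of f. -/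
open MeasureTheory Metric Real

/-!
Differentiating under both integrals gives `∇Kf(x) = -∫ e^{-Xf(x,θ)} (∫ ∇f(x + sθ) ds) dθ`. If `x`
and the support of `f` lie in the ball of radius `r` about the origin, only `|s| ≤ 2r` contributes,
so `|Xf| ≤ 4r‖f‖_∞`, and `|∇Kf(x)|` is at most `e^{4r‖f‖_∞}` times the superposition of the
translates `|∇f|(x + sθ)` against the finite measure `dθ ds` on `S^{n-1} × [-2r, 2r]`. By
Minkowski's inequality, such a superposition is bounded on every `L^p`, `p ≥ 1`, by the total mass
`4r|S^{n-1}|`.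
-/

open Set Function
open scoped ENNReal Topology

section Translation

variable {α G : Type*} [MeasurableSpace α] {μ : Measure α}

lemma rpow_lintegral_le_measure_univ_rpow_mul_lintegral_rpow {g : α → ℝ≥0∞}
    (hg : AEMeasurable g μ) {q : ℝ} (hq : 1 ≤ q) :
    (∫⁻ a, g a ∂μ) ^ q ≤ μ univ ^ (q - 1) * ∫⁻ a, g a ^ q ∂μ := by
  have hq0 : 0 < q := one_pos.trans_le hq
  have h := eLpNorm'_le_eLpNorm'_mul_rpow_measure_univ one_pos hq hg.aestronglyMeasurable
  simp only [eLpNorm'_eq_lintegral_enorm, enorm_eq_self, ENNReal.rpow_one, div_one] at h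
  calc (∫⁻ a, g a ∂μ) ^ q
      ≤ ((∫⁻ a, g a ^ q ∂μ) ^ (1 / q) * μ univ ^ (1 - 1 / q)) ^ q := by gcongr
    _ = μ univ ^ (q - 1) * ∫⁻ a, g a ^ q ∂μ := by
      rw [ENNReal.mul_rpow_of_nonneg _ _ hq0.le, ← ENNReal.rpow_mul, ← ENNReal.rpow_mul,
        one_div_mul_cancel hq0.ne', ENNReal.rpow_one, sub_mul, one_div_mul_cancel hq0.ne', one_mul,
        mul_comm]

variable [MeasurableSpace G] [AddGroup G] [MeasurableAdd₂ G] {ν : Measure G}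
  [ν.IsAddRightInvariant] [SFinite ν] [SFinite μ]

lemma lintegral_rpow_lintegral_comp_add_le {g : G → ℝ≥0∞} (hg : Measurable g) {v : α → G}
    (hv : Measurable v) {q : ℝ} (hq : 1 ≤ q) :
    ∫⁻ x, (∫⁻ a, g (x + v a) ∂μ) ^ q ∂ν ≤ μ univ ^ q * ∫⁻ x, g x ^ q ∂ν := by
  have hgv : Measurable fun z : G × α => g (z.1 + v z.2) ^ q := by fun_prop
  calc ∫⁻ x, (∫⁻ a, g (x + v a) ∂μ) ^ q ∂ν
      ≤ ∫⁻ x, μ univ ^ (q - 1) * ∫⁻ a, g (x + v a) ^ q ∂μ ∂ν := by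
        gcongr with x
        exact rpow_lintegral_le_measure_univ_rpow_mul_lintegral_rpow (by fun_prop) hq
    _ = μ univ ^ (q - 1) * ∫⁻ a, ∫⁻ x, g (x + v a) ^ q ∂ν ∂μ := by
        rw [lintegral_const_mul _ hgv.lintegral_prod_right',
          lintegral_lintegral_swap hgv.aemeasurable]
    _ = μ univ ^ (q - 1) * (μ univ * ∫⁻ x, g x ^ q ∂ν) := by
        simp_rw [lintegral_add_right_eq_self (fun x => g x ^ q), lintegral_const, mul_comm]
    _ = μ univ ^ q * ∫⁻ x, g x ^ q ∂ν := by
        rw [← mul_assoc]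
        nth_rw 2 [← ENNReal.rpow_one (μ univ)]
        rw [← ENNReal.rpow_add_of_nonneg _ _ (sub_nonneg.2 hq) zero_le_one, sub_add_cancel]

lemma eLpNorm_top_lintegral_comp_add_le {g : G → ℝ≥0∞} (hg : Measurable g) {v : α → G}
    (hv : Measurable v) :
    eLpNorm (fun x => ∫⁻ a, g (x + v a) ∂μ) ∞ ν ≤ μ univ * eLpNorm g ∞ ν := by
  simp only [eLpNorm_exponent_top]
  have hmeas : MeasurableSet {z : α × G | g (z.2 + v z.1) ≤ eLpNormEssSup g ν} :=
    measurableSet_le (by fun_prop) measurable_const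
  have hshift : ∀ a, ∀ᵐ x ∂ν, g (x + v a) ≤ eLpNormEssSup g ν := fun a =>
    (measurePreserving_add_right ν (v a)).quasiMeasurePreserving.ae (enorm_ae_le_eLpNormEssSup g ν)
  refine essSup_le_of_ae_le _ ?_
  filter_upwards [(Measure.ae_ae_comm (μ := μ) (ν := ν) hmeas).1 (.of_forall hshift)] with x hx
  calc ∫⁻ a, g (x + v a) ∂μ ≤ ∫⁻ _, eLpNormEssSup g ν ∂μ := lintegral_mono_ae hx
    _ = μ univ * eLpNormEssSup g ν := by rw [lintegral_const, mul_comm]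

theorem eLpNorm_lintegral_comp_add_le {g : G → ℝ≥0∞} (hg : Measurable g) {v : α → G}
    (hv : Measurable v) {p : ℝ≥0∞} (hp : 1 ≤ p) :
    eLpNorm (fun x => ∫⁻ a, g (x + v a) ∂μ) p ν ≤ μ univ * eLpNorm g p ν := by
  rcases eq_or_ne p ∞ with rfl | hp_top
  · exact eLpNorm_top_lintegral_comp_add_le hg hv
  have hp_zero : p ≠ 0 := (one_pos.trans_le hp).ne'
  have hq : 1 ≤ p.toReal := by simpa using ENNReal.toReal_mono hp_top hp
  simp only [eLpNorm_eq_lintegral_rpow_enorm_toReal hp_zero hp_top, enorm_eq_self]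
  calc (∫⁻ x, (∫⁻ a, g (x + v a) ∂μ) ^ p.toReal ∂ν) ^ (1 / p.toReal)
      ≤ (μ univ ^ p.toReal * ∫⁻ x, g x ^ p.toReal ∂ν) ^ (1 / p.toReal) := by
        gcongr
        exact lintegral_rpow_lintegral_comp_add_le hg hv hq
    _ = μ univ * (∫⁻ x, g x ^ p.toReal ∂ν) ^ (1 / p.toReal) := by
        rw [ENNReal.mul_rpow_of_nonneg _ _ (by positivity), ← ENNReal.rpow_mul,
          mul_one_div_cancel (by positivity), ENNReal.rpow_one]

end Translation

section ExponentialIntegral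

variable {α E : Type*} [MeasurableSpace α] {μ : Measure α} [IsFiniteMeasure μ]
  [NormedAddCommGroup E] [NormedSpace ℝ E]

lemma hasFDerivAt_integral_exp_neg {u : E → α → ℝ} {u' : E → α → E →L[ℝ] ℝ} {x : E} {U : Set E}
    {A B : ℝ} (hU : U ∈ 𝓝 x) (hu : ∀ y ∈ U, AEStronglyMeasurable (u y) μ)
    (hu' : AEStronglyMeasurable (u' x) μ) (hA : ∀ᵐ a ∂μ, ∀ y ∈ U, -A ≤ u y a)
    (hB : ∀ᵐ a ∂μ, ∀ y ∈ U, ‖u' y a‖ ≤ B)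
    (hderiv : ∀ᵐ a ∂μ, ∀ y ∈ U, HasFDerivAt (u · a) (u' y a) y) :
    HasFDerivAt (fun y => ∫ a, exp (-u y a) ∂μ) (∫ a, exp (-u x a) • -u' x a ∂μ) x := by
  have hx : x ∈ U := mem_of_mem_nhds hU
  have hmeas : ∀ y ∈ U, AEStronglyMeasurable (fun a => exp (-u y a)) μ := fun y hy =>
    continuous_exp.comp_aestronglyMeasurable (hu y hy).neg
  refine hasFDerivAt_integral_of_dominated_of_fderiv_le
    (F' := fun y a => exp (-u y a) • -u' y a) (bound := fun _ => exp A * B) hU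
    (Filter.eventually_of_mem hU hmeas) ?_ ((hmeas x hx).smul hu'.neg) ?_ (integrable_const _) ?_
  · refine .of_bound (hmeas x hx) (exp A) ?_
    filter_upwards [hA] with a ha
    rw [norm_of_nonneg (exp_pos _).le]
    exact exp_le_exp.2 (neg_le.1 (ha x hx))
  · filter_upwards [hA, hB] with a ha hb y hy
    rw [norm_smul, norm_neg, norm_of_nonneg (exp_pos _).le]
    gcongr
    exacts [neg_le.1 (ha y hy), hb y hy]
  · filter_upwards [hderiv] with a ha y hy using (ha y hy).neg.exp

end ExponentialIntegral

section LineIntegral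

variable {E F : Type*} [NormedAddCommGroup E] [NormedSpace ℝ E] {r : ℝ}

lemma support_comp_line_subset [Zero F] {f : E → F} (hsupp : support f ⊆ closedBall 0 r) {x θ : E}
    (hx : x ∈ closedBall 0 r) (hθ : ‖θ‖ = 1) :
    (support fun s : ℝ => f (x + s • θ)) ⊆ Icc (-(2 * r)) (2 * r) := by
  intro s hs
  have hxs : ‖x + s • θ‖ ≤ r := mem_closedBall_zero_iff.1 (hsupp hs)
  have hs_le : ‖s • θ‖ ≤ ‖x + s • θ‖ + ‖x‖ := by simpa using norm_sub_le (x + s • θ) x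
  rw [norm_smul, hθ, mul_one, norm_eq_abs] at hs_le
  exact abs_le.1 (by linarith [mem_closedBall_zero_iff.1 hx])

variable [NormedAddCommGroup F] [NormedSpace ℝ F] {f : E → F}

lemma integral_line_eq_setIntegral (hsupp : support f ⊆ closedBall 0 r) {x θ : E}
    (hx : x ∈ closedBall 0 r) (hθ : ‖θ‖ = 1) :
    ∫ s : ℝ, f (x + s • θ) = ∫ s in Icc (-(2 * r)) (2 * r), f (x + s • θ) :=
  (setIntegral_eq_integral_of_forall_compl_eq_zero fun _ hs =>
    notMem_support.1 fun hne => hs (support_comp_line_subset hsupp hx hθ hne)).symm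

lemma norm_integral_line_le (hsupp : support f ⊆ closedBall 0 r) {x θ : E}
    (hx : x ∈ closedBall 0 r) (hθ : ‖θ‖ = 1) {M : ℝ} (hM : ∀ y, ‖f y‖ ≤ M) :
    ‖∫ s : ℝ, f (x + s • θ)‖ ≤ 4 * r * M := by
  have hr : 0 ≤ r := nonempty_closedBall.1 ⟨x, hx⟩
  rw [integral_line_eq_setIntegral hsupp hx hθ]
  refine (norm_integral_le_of_norm_le_const (.of_forall fun s => hM _)).trans_eq ?_
  rw [measureReal_restrict_apply_univ, volume_real_Icc_of_le (by linarith)]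
  ring

lemma hasFDerivAt_integral_line (hf : ContDiff ℝ 1 f) {D : ℝ} (hD : ∀ y, ‖fderiv ℝ f y‖ ≤ D)
    (hsupp : support f ⊆ closedBall 0 r) {x θ : E} (hx : x ∈ ball 0 r) (hθ : ‖θ‖ = 1) :
    HasFDerivAt (fun y => ∫ s : ℝ, f (y + s • θ)) (∫ s : ℝ, fderiv ℝ f (x + s • θ)) x := by
  have hsupp' : support (fderiv ℝ f) ⊆ closedBall 0 r :=
    (support_fderiv_subset ℝ).trans (closure_minimal hsupp isClosed_closedBall)
  have hline_cont (y : E) : Continuous fun s : ℝ => f (y + s • θ) :=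
    hf.continuous.comp (by fun_prop)
  have hline'_cont : Continuous fun s : ℝ => fderiv ℝ f (x + s • θ) :=
    (hf.continuous_fderiv one_ne_zero).comp (by fun_prop)
  have hline_cs : HasCompactSupport fun s : ℝ => f (x + s • θ) :=
    .of_support_subset_isCompact isCompact_Icc
      (support_comp_line_subset hsupp (ball_subset_closedBall hx) hθ)
  refine hasFDerivAt_integral_of_dominated_of_fderiv_le
    (bound := (Icc (-(2 * r)) (2 * r)).indicator fun _ => D) (isOpen_ball.mem_nhds hx)
    (.of_forall fun y => (hline_cont y).aestronglyMeasurable)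
    ((hline_cont x).integrable_of_hasCompactSupport hline_cs) hline'_cont.aestronglyMeasurable
    (.of_forall fun s y hy => ?_)
    ((integrable_indicator_iff measurableSet_Icc).2 (integrable_const D))
    (.of_forall fun s y _ =>
      (hasFDerivAt_comp_add_right _).2 (hf.differentiable one_ne_zero _).hasFDerivAt)
  refine le_indicator_apply (fun _ => hD _) fun hs => (norm_eq_zero.2 ?_).le
  by_contra hne
  exact hs (support_comp_line_subset hsupp' (ball_subset_closedBall hy) hθ hne)

lemma stronglyMeasurable_integral_line [MeasurableSpace E] [BorelSpace E]
    [SecondCountableTopology E] (hf : Continuous f) (x : E) (S : Set E) :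
    StronglyMeasurable fun θ : S => ∫ s : ℝ, f (x + s • (θ : E)) :=
  StronglyMeasurable.integral_prod_right
    (by fun_prop : Continuous fun z : S × ℝ => f (x + z.2 • (z.1 : E))).stronglyMeasurable

end LineIntegral

section SinglePixel

variable {n : ℕ} {f : Euc n → ℝ} {r M : ℝ}

instance (n : ℕ) : IsFiniteMeasure (sphereMeasure n) :=
  inferInstanceAs (IsFiniteMeasure (volume : Measure (Euc n)).toSphere)

theorem hasFDerivAt_singlePixel (hf : ContDiff ℝ 1 f) (hcs : HasCompactSupport f) (x : Euc n) :
    HasFDerivAt (singlePixel f)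
      (∫ θ : sphere (0 : Euc n) 1, exp (-Xray f x θ) •
        -(∫ s : ℝ, fderiv ℝ f (x + s • (θ : Euc n))) ∂(sphereMeasure n)) x := by
  have hf'_cont : Continuous (fderiv ℝ f) := hf.continuous_fderiv one_ne_zero
  obtain ⟨r, hr⟩ :=
    (hcs.isCompact.isBounded.union (Bornology.isBounded_singleton (x := x))).subset_ball 0
  obtain ⟨htsupp, hx⟩ := union_subset_iff.1 hr
  replace htsupp : tsupport f ⊆ closedBall 0 r := htsupp.trans ball_subset_closedBall
  have hsupp : support f ⊆ closedBall 0 r := (subset_tsupport f).trans htsupp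
  have hsupp' : support (fderiv ℝ f) ⊆ closedBall 0 r := (support_fderiv_subset ℝ).trans htsupp
  obtain ⟨M, hM⟩ := hcs.exists_bound_of_continuous hf.continuous
  obtain ⟨D, hD⟩ := (hcs.fderiv ℝ).exists_bound_of_continuous hf'_cont
  refine hasFDerivAt_integral_exp_neg (U := ball 0 r) (A := 4 * r * M) (B := 4 * r * D)
    (u' := fun y (θ : sphere (0 : Euc n) 1) => ∫ s : ℝ, fderiv ℝ f (y + s • (θ : Euc n)))
    (isOpen_ball.mem_nhds (singleton_subset_iff.1 hx))
    (fun y _ => (stronglyMeasurable_integral_line hf.continuous y _).aestronglyMeasurable)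
    (stronglyMeasurable_integral_line hf'_cont x _).aestronglyMeasurable
    (.of_forall fun θ y hy => (abs_le.1 ?_).1) (.of_forall fun θ y hy => ?_)
    (.of_forall fun θ y hy => hasFDerivAt_integral_line hf hD hsupp hy (norm_eq_of_mem_sphere θ))
  · exact norm_integral_line_le hsupp (ball_subset_closedBall hy) (norm_eq_of_mem_sphere θ) hM
  · exact norm_integral_line_le hsupp' (ball_subset_closedBall hy) (norm_eq_of_mem_sphere θ) hD

/-- The measure `dθ ds` on the pairs `(θ, s)` with `|s| ≤ ρ`, which parametrize the points
`x + s • θ` of the lines through a pixel `x` up to distance `ρ`. -/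
noncomputable def beamMeasure (n : ℕ) (ρ : ℝ) : Measure (sphere (0 : Euc n) 1 × ℝ) :=
  (sphereMeasure n).prod (volume.restrict (Icc (-ρ) ρ))

instance (n : ℕ) (ρ : ℝ) : SFinite (beamMeasure n ρ) :=
  inferInstanceAs (SFinite ((sphereMeasure n).prod _))

lemma beamMeasure_univ (n : ℕ) (ρ : ℝ) :
    beamMeasure n ρ univ = ENNReal.ofReal (sphereVol n * (2 * ρ)) := by
  rw [beamMeasure, ← univ_prod_univ, Measure.prod_prod, Measure.restrict_apply_univ, volume_Icc,
    sphereVol, ENNReal.ofReal_mul ENNReal.toReal_nonneg,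
    ENNReal.ofReal_toReal (measure_ne_top _ _), sub_neg_eq_add, two_mul]

lemma enorm_fderiv_singlePixel_le (hf : ContDiff ℝ 1 f) (hM : ∀ y, |f y| ≤ M)
    (hsupp : support f ⊆ closedBall 0 r) {x : Euc n} (hx : x ∈ closedBall 0 r) :
    ‖fderiv ℝ (singlePixel f) x‖ₑ ≤ ENNReal.ofReal (exp (4 * r * M)) *
      ∫⁻ z, ‖fderiv ℝ f (x + z.2 • (z.1 : Euc n))‖ₑ ∂beamMeasure n (2 * r) := by
  have hcs : HasCompactSupport f := .of_support_subset_isCompact (isCompact_closedBall 0 r) hsupp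
  have hsupp' : support (fderiv ℝ f) ⊆ closedBall 0 r :=
    (support_fderiv_subset ℝ).trans (closure_minimal hsupp isClosed_closedBall)
  have hmeas : Measurable fun z : sphere (0 : Euc n) 1 × ℝ =>
      ‖fderiv ℝ f (x + z.2 • (z.1 : Euc n))‖ₑ :=
    ((hf.continuous_fderiv one_ne_zero).comp (by fun_prop)).enorm.measurable
  rw [(hasFDerivAt_singlePixel hf hcs x).fderiv, beamMeasure, lintegral_prod _ hmeas.aemeasurable,
    ← lintegral_const_mul _ hmeas.lintegral_prod_right']
  refine (enorm_integral_le_lintegral_enorm _).trans (lintegral_mono fun θ => ?_)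
  have hθ : ‖(θ : Euc n)‖ = 1 := norm_eq_of_mem_sphere θ
  rw [enorm_smul, enorm_neg, enorm_of_nonneg (exp_pos _).le,
    integral_line_eq_setIntegral hsupp' hx hθ]
  gcongr
  · exact (neg_le_abs _).trans (norm_integral_line_le hsupp hx hθ hM)
  · exact enorm_integral_le_lintegral_enorm _

lemma eLpNorm_fderiv_singlePixel_le (hf : ContDiff ℝ 1 f) (hM : ∀ y, |f y| ≤ M)
    (hsupp : support f ⊆ closedBall 0 r) {p : ℝ≥0∞} (hp : 1 ≤ p) :
    eLpNorm (fderiv ℝ (singlePixel f)) p (volume.restrict (closedBall 0 r)) ≤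
      ENNReal.ofReal (exp (4 * r * M)) *
        (beamMeasure n (2 * r) univ * eLpNorm (fderiv ℝ f) p volume) := by
  have hf'_cont : Continuous (fderiv ℝ f) := hf.continuous_fderiv one_ne_zero
  have hbound : ∀ᵐ x ∂(volume : Measure (Euc n)).restrict (closedBall 0 r),
      ‖fderiv ℝ (singlePixel f) x‖ₑ ≤ ENNReal.ofReal (exp (4 * r * M)) *
        ∫⁻ z, ‖fderiv ℝ f (x + z.2 • (z.1 : Euc n))‖ₑ ∂beamMeasure n (2 * r) :=
    ae_restrict_of_forall_mem measurableSet_closedBall fun x hx =>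
      enorm_fderiv_singlePixel_le hf hM hsupp hx
  calc eLpNorm (fderiv ℝ (singlePixel f)) p (volume.restrict (closedBall 0 r))
      ≤ ENNReal.ofReal (exp (4 * r * M)) *
          eLpNorm (fun x => ∫⁻ z, ‖fderiv ℝ f (x + z.2 • (z.1 : Euc n))‖ₑ ∂beamMeasure n (2 * r))
            p (volume.restrict (closedBall 0 r)) :=
        eLpNorm_le_mul_eLpNorm_of_ae_le_mul' hbound p
    _ ≤ ENNReal.ofReal (exp (4 * r * M)) *
          eLpNorm (fun x => ∫⁻ z, ‖fderiv ℝ f (x + z.2 • (z.1 : Euc n))‖ₑ ∂beamMeasure n (2 * r))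
            p volume := by
        gcongr
        exact Measure.restrict_le_self
    _ ≤ ENNReal.ofReal (exp (4 * r * M)) *
          (beamMeasure n (2 * r) univ * eLpNorm (fderiv ℝ f) p volume) := by
        gcongr
        rw [← eLpNorm_enorm (fderiv ℝ f)]
        exact eLpNorm_lintegral_comp_add_le hf'_cont.enorm.measurable
          (by fun_prop : Measurable fun z : sphere (0 : Euc n) 1 × ℝ => z.2 • (z.1 : Euc n)) hp

theorem lpNorm_fderiv_singlePixel_le (hf : ContDiff ℝ 1 f) (hM : ∀ y, |f y| ≤ M)
    (hsupp : support f ⊆ closedBall 0 r) (hr : 0 ≤ r) {U : Set (Euc n)} (hU : U ⊆ closedBall 0 r)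
    {p : ℝ≥0∞} (hp : 1 ≤ p) :
    lpNorm (fderiv ℝ (singlePixel f)) p (volume.restrict U) ≤
      exp (4 * r * M) * (4 * r * sphereVol n) * lpNorm (fderiv ℝ f) p volume := by
  have hvol : 0 ≤ sphereVol n := ENNReal.toReal_nonneg
  have hcs : HasCompactSupport f := .of_support_subset_isCompact (isCompact_closedBall 0 r) hsupp
  have hmemLp : MemLp (fderiv ℝ f) p volume :=
    (hf.continuous_fderiv one_ne_zero).memLp_of_hasCompactSupport (hcs.fderiv ℝ)
  rw [← toReal_eLpNorm (measurable_fderiv ℝ _).aestronglyMeasurable]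
  refine ENNReal.toReal_le_of_le_ofReal (mul_nonneg (by positivity) lpNorm_nonneg) ?_
  calc eLpNorm (fderiv ℝ (singlePixel f)) p (volume.restrict U)
      ≤ eLpNorm (fderiv ℝ (singlePixel f)) p (volume.restrict (closedBall 0 r)) := by gcongr
    _ ≤ ENNReal.ofReal (exp (4 * r * M)) *
          (beamMeasure n (2 * r) univ * eLpNorm (fderiv ℝ f) p volume) :=
        eLpNorm_fderiv_singlePixel_le hf hM hsupp hp
    _ = ENNReal.ofReal
          (exp (4 * r * M) * (4 * r * sphereVol n) * lpNorm (fderiv ℝ f) p volume) := by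
        rw [beamMeasure_univ, ← ofReal_lpNorm hmemLp, ← ENNReal.ofReal_mul (by positivity),
          ← ENNReal.ofReal_mul (by positivity)]
        ring_nf

theorem singlePixel_gradient_estimate_general (n : ℕ) {Ω Ω₁ : Set (Euc n)}
    (hΩ : Bornology.IsBounded Ω) (hΩ₁ : Bornology.IsBounded Ω₁) :
    ∃ C > 0, ∀ f : Euc n → ℝ, ContDiff ℝ 1 f → support f ⊆ Ω → ∀ p : ℝ≥0∞, 1 ≤ p →
      lpNorm (fderiv ℝ (singlePixel f)) p (volume.restrict Ω₁) ≤
        C * exp (C * ⨆ x, |f x|) * lpNorm (fderiv ℝ f) p volume := by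
  obtain ⟨r, hr, hΩr⟩ := (hΩ.union hΩ₁).subset_closedBall_lt 0 0
  have hvol : 0 ≤ sphereVol n := ENNReal.toReal_nonneg
  refine ⟨4 * r + 4 * r * sphereVol n, by positivity, fun f hf hsupp p hp => ?_⟩
  replace hsupp : support f ⊆ closedBall 0 r := hsupp.trans (subset_union_left.trans hΩr)
  have hcs : HasCompactSupport f := .of_support_subset_isCompact (isCompact_closedBall 0 r) hsupp
  have hM : ∀ x, |f x| ≤ ⨆ y, |f y| :=
    le_ciSup (hf.continuous.abs.bddAbove_range_of_hasCompactSupport hcs.norm)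
  have hM_nonneg : 0 ≤ ⨆ y, |f y| := iSup_nonneg fun y => abs_nonneg (f y)
  refine (lpNorm_fderiv_singlePixel_le hf hM hsupp hr.le (subset_union_right.trans hΩr) hp).trans ?_
  rw [mul_comm (exp _)]
  gcongr
  · exact lpNorm_nonneg
  · exact le_add_of_nonneg_left (by positivity)
  · exact le_add_of_nonneg_right (by positivity)

end SinglePixel

/-- For `n ≥ 3` and open bounded `Ω, Ω₁` with `closure Ω ⊂ Ω₁`, there is `C > 0`
such that for every `C¹` function `f` supported in `closure Ω`,
`‖∇(Kf)‖_{L²(Ω₁)} ≤ C e^{C‖f‖_{C⁰}} ‖∇f‖_{L²(ℝⁿ)}`. -/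
theorem singlePixel_gradient_estimate (n : ℕ) (hn : 3 ≤ n) (Ω Ω₁ : Set (Euc n))
    (hΩo : IsOpen Ω) (hΩb : Bornology.IsBounded Ω)
    (hΩ₁o : IsOpen Ω₁) (hΩ₁b : Bornology.IsBounded Ω₁) (hΩΩ₁ : closure Ω ⊆ Ω₁) :
    ∃ C > 0, ∀ f : Euc n → ℝ, ContDiff ℝ 1 f → Function.support f ⊆ closure Ω →
      (∫ x in Ω₁, ‖fderiv ℝ (singlePixel f) x‖ ^ 2) ^ ((1 : ℝ) / 2) ≤
        C * Real.exp (C * ⨆ x : Euc n, |f x|) *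
          (∫ x : Euc n, ‖fderiv ℝ f x‖ ^ 2) ^ ((1 : ℝ) / 2) := by
  obtain ⟨C, hC, hle⟩ := singlePixel_gradient_estimate_general n hΩb.closure hΩ₁b
  refine ⟨C, hC, fun f hf hsupp => ?_⟩
  simpa [lpNorm_eq_integral_norm_rpow_toReal, (measurable_fderiv ℝ _).aestronglyMeasurable]
    using hle f hf hsupp 2 one_le_two
end
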